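/- Every ℤ^p-action A on ℤ³ with nonzero fixed-point set is the linear part of a free affine ℤ^p-action on T³. -/

import Mathlib

open Matrix

lemma core {p : ℕ} (T : (Fin p → ℤ) → Matrix (Fin 3) (Fin 3) ℚ)
    (hT : ∀ l l', T (l + l') = T l * T l')
    (h00 : ∀ l, T l 0 0 = 1) (h10 : ∀ l, T l 1 0 = 0) (h20 : ∀ l, T l 2 0 = 0)
    (h21 : ∀ l, T l 2 1 = 0) (h22 : ∀ l, T l 2 2 = 1)
    (l0 : Fin p → ℤ) (hl0 : l0 ≠ 0) :
    ∃ β : (Fin p → ℤ) → (Fin 3 → ℚ), (∀ l l', β (l + l') = β l + T l *ᵥ β l') ∧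
      ∃ f : Fin 3 → ℚ, f ᵥ* T l0 = f ∧ f ⬝ᵥ β l0 ≠ 0 := by
  -- coordinates
  obtain ⟨h, hadd, hh0⟩ : ∃ h : (Fin p → ℤ) → ℚ, (∀ l l', h (l + l') = h l + h l') ∧ h l0 ≠ 0 := by
    obtain ⟨i, hi⟩ := Function.ne_iff.mp hl0
    exact ⟨fun l => (l i : ℚ), fun l l' => by simp, by simpa using hi⟩
  obtain ⟨a, ha⟩ : ∃ a : (Fin p → ℤ) → ℚ, ∀ l, T l 0 1 = a l := ⟨_, fun _ => rfl⟩
  obtain ⟨b, hb⟩ : ∃ a : (Fin p → ℤ) → ℚ, ∀ l, T l 1 2 = a l := ⟨_, fun _ => rfl⟩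
  obtain ⟨c, hc⟩ : ∃ a : (Fin p → ℤ) → ℚ, ∀ l, T l 0 2 = a l := ⟨_, fun _ => rfl⟩
  obtain ⟨d, hd⟩ : ∃ a : (Fin p → ℤ) → ℚ, ∀ l, T l 1 1 = a l := ⟨_, fun _ => rfl⟩
  have da : ∀ l l', a (l + l') = a l' + a l * d l' := fun l l' => by
    have := congrFun (congrFun (hT l l') 0) 1
    simpa [Matrix.mul_apply, Fin.sum_univ_three, ha, hb, hc, hd, h00, h10, h20, h21, h22] using this
  have db : ∀ l l', b (l + l') = d l * b l' + b l := fun l l' => by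
    have := congrFun (congrFun (hT l l') 1) 2
    simpa [Matrix.mul_apply, Fin.sum_univ_three, ha, hb, hc, hd, h00, h10, h20, h21, h22] using this
  have dc : ∀ l l', c (l + l') = c l' + a l * b l' + c l := fun l l' => by
    have := congrFun (congrFun (hT l l') 0) 2
    simpa [Matrix.mul_apply, Fin.sum_univ_three, ha, hb, hc, hd, h00, h10, h20, h21, h22] using this
  have dd : ∀ l l', d (l + l') = d l * d l' := fun l l' => by
    have := congrFun (congrFun (hT l l') 1) 1
    simpa [Matrix.mul_apply, Fin.sum_univ_three, ha, hb, hc, hd, h00, h10, h20, h21, h22] using this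
  have ca : ∀ l l', a l' + a l * d l' = a l + a l' * d l := fun l l' => by
    rw [← da, ← da, add_comm]
  have cb : ∀ l l', d l * b l' + b l = d l' * b l + b l' := fun l l' => by
    rw [← db, ← db, add_comm]
  have cc : ∀ l l', a l * b l' = a l' * b l := fun l l' => by
    have := dc l l'
    rw [add_comm, dc] at this
    linarith
  -- reduce to coordinates
  suffices H : ∃ x y z : (Fin p → ℤ) → ℚ,
      (∀ l l', x (l + l') = x l + (x l' + a l * y l' + c l * z l')) ∧
      (∀ l l', y (l + l') = y l + (d l * y l' + b l * z l')) ∧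
      (∀ l l', z (l + l') = z l + z l') ∧
      ∃ f0 f1 f2 : ℚ, f0 * a l0 + f1 * d l0 = f1 ∧ f0 * c l0 + f1 * b l0 = 0 ∧
        f0 * x l0 + f1 * y l0 + f2 * z l0 ≠ 0 by
    obtain ⟨x, y, z, hx, hy, hz, f0, f1, f2, e1, e2, e3⟩ := H
    refine ⟨fun l => ![x l, y l, z l], fun l l' => ?_, ![f0, f1, f2], ?_, ?_⟩
    · ext i
      fin_cases i <;>
      simp [Matrix.mulVec, dotProduct, Fin.sum_univ_three, ha, hb, hc, hd, h00, h10, h20, h21, h22, hx, hy, hz]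
    · ext i
      fin_cases i <;>
      simp [Matrix.vecMul, dotProduct, Fin.sum_univ_three, ha, hb, hc, hd, h00, h10, h20, h21, h22, e1, e2]
    · simpa [dotProduct, Fin.sum_univ_three] using e3
  -- the cocycle h e1
  have good : ∀ f1 : ℚ, a l0 + f1 * d l0 = f1 → c l0 + f1 * b l0 = 0 →  ∃ x y z : (Fin p → ℤ) → ℚ,
      (∀ l l', x (l + l') = x l + (x l' + a l * y l' + c l * z l')) ∧
      (∀ l l', y (l + l') = y l + (d l * y l' + b l * z l')) ∧
      (∀ l l', z (l + l') = z l + z l') ∧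
      ∃ f0 f1 f2 : ℚ, f0 * a l0 + f1 * d l0 = f1 ∧ f0 * c l0 + f1 * b l0 = 0 ∧
        f0 * x l0 + f1 * y l0 + f2 * z l0 ≠ 0 := fun f1 h1 h2 =>
    ⟨h, fun _ => 0, fun _ => 0, by simp [hadd], by simp, by simp, 1, f1, 0, by simpa using h1,
      by simpa using h2, by simpa using hh0⟩
  by_cases hd1 : ∀ l, d l = 1
  · simp only [hd1, mul_one, one_mul] at *
    by_cases hN : a l0 = 0 ∧ b l0 = 0 ∧ c l0 = 0
    · exact good 0 (by simp [hN]) (by simp [hN])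
    by_cases hb0 : ∀ l, b l = 0
    · refine ⟨fun l => (a l ^ 2 + c l ^ 2) / 2, a, c, fun l l' => ?_, fun l l' => ?_, fun l l' => ?_,
        0, a l0, c l0, by simp, by simp [hb0], ?_⟩
      · simp only [da, dc, hb0]; ring
      · simp only [da, hb0]; ring
      · simp only [dc, hb0]; ring
      · intro h
        apply hN
        refine ⟨?_, hb0 _, ?_⟩ <;> nlinarith [sq_nonneg (a l0), sq_nonneg (c l0)]
    by_cases ha0 : ∀ l, a l = 0
    · refine ⟨fun l => h l * b l0, fun l => - (h l * c l0), fun _ => 0, fun l l' => ?_, fun l l' => ?_,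
        fun l l' => by simp, b l0, - c l0, 0, by simp [ha0], by ring, ?_⟩
      · simp only [hadd, ha0]; ring
      · simp only [hadd]; ring
      · have e : b l0 * (h l0 * b l0) + -c l0 * -(h l0 * c l0) + 0 * 0 = h l0 * (b l0 ^ 2 + c l0 ^ 2) := by ring
        intro h
        rw [e] at h
        have h := (mul_eq_zero.mp h).resolve_left hh0
        apply hN
        refine ⟨ha0 _, ?_, ?_⟩ <;> nlinarith [sq_nonneg (b l0), sq_nonneg (c l0)]
    push Not at ha0 hb0
    obtain ⟨l1, h1⟩ := ha0
    obtain ⟨κ, hκ⟩ : ∃ κ, ∀ l, b l = κ * a l := ⟨b l1 / a l1, fun l => by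
      field_simp; linarith [cc l1 l]⟩
    refine ⟨fun l => κ * a l ^ 3 / 6 + a l * (c l - κ * a l ^ 2 / 2), c, a,
      fun l l' => ?_, fun l l' => ?_, fun l l' => ?_, ?_⟩
    · simp only [da, dc, hκ]; ring
    · simp only [dc, hκ]; ring
    · simp only [da]; ring
    by_cases ha0 : a l0 = 0
    · refine ⟨0, 1, 0, by simp, by simp [hκ, ha0], ?_⟩
      simp only [hκ, ha0] at hN
      simpa using hN
    · exact ⟨0, 0, 1, by simp, by simp, by simpa using ha0⟩
  · push Not at hd1
    obtain ⟨l1, h1⟩ := hd1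
    have h1' : 1 - d l1 ≠ 0 := sub_ne_zero.mpr h1.symm
    obtain ⟨r, hr⟩ : ∃ r, ∀ l, b l = r * (1 - d l) := ⟨b l1 / (1 - d l1), fun l => by
      field_simp; linarith [cb l1 l]⟩
    by_cases hc0 : c l0 + a l0 * r = 0
    · by_cases hd0 : d l0 = 1
      · have : a l0 = 0 := by
          have := ca l1 l0
          rw [hd0] at this
          have : a l0 * (1 - d l1) = 0 := by linarith
          exact (mul_eq_zero.mp this).resolve_right h1'
        rw [this] at hc0
        exact good 0 (by simp [this]) (by simpa using hc0)
      · have h0' : 1 - d l0 ≠ 0 := sub_ne_zero.mpr (Ne.symm hd0)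
        refine good (a l0 / (1 - d l0)) (by field_simp; ring) ?_
        rw [hr]; field_simp; linarith
    · refine ⟨fun l => (c l + a l * r) ^ 2 / 2, fun l => (c l + a l * r) * r, fun l => c l + a l * r,
        fun l l' => ?_, fun l l' => ?_, fun l l' => ?_, 0, 0, 1, by simp, by simp, by simpa using hc0⟩
      · simp only [da, dc, hr]; ring
      · simp only [da, dc, hr]; ring
      · simp only [da, dc, hr]; ring

lemma exists_w {ι : Type*} (B : ι → Module.End ℚ (Fin 3 → ℚ)) (i0 : ι)
    (hcomm : ∀ i x, B i (B i0 x) = B i0 (B i x)) (v u : Fin 3 → ℚ) (hv : v ≠ 0)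
    (hfix : ∀ i, B i v = v) (hu : B i0 u - u = v) :
    ∃ w : (Fin 3 → ℚ) →ₗ[ℚ] ℚ, w ≠ 0 ∧ w v = 0 ∧ ∀ i x, w (B i x) = w x := by
  obtain ⟨N, hN⟩ : ∃ N : Module.End ℚ (Fin 3 → ℚ), ∀ x, N x = B i0 x - x := ⟨B i0 - 1, fun x => rfl⟩
  have hc : ∀ i x, N (B i x) = B i (N x) := fun i x => by simp [hN, hcomm]
  have hNu : N u = v := by rw [hN, hu]
  have hNv : N v = 0 := by simp [hN, hfix]
  have hrn := N.finrank_range_add_finrank_ker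
  simp only [Module.finrank_fin_fun] at hrn
  have hsv : Module.finrank ℚ (ℚ ∙ v) = 1 := finrank_span_singleton hv
  have hvr : (ℚ ∙ v) ≤ LinearMap.range N := by
    rw [Submodule.span_singleton_le_iff_mem]; exact ⟨u, hNu⟩
  have hvk : (ℚ ∙ v) ≤ LinearMap.ker N := by
    rw [Submodule.span_singleton_le_iff_mem]; exact hNv
  by_cases hr : LinearMap.range N = ℚ ∙ v
  · have : ∀ x, ∃ k : ℚ, k • v = N x := fun x => by
      rw [← Submodule.mem_span_singleton, ← hr]; exact ⟨x, rfl⟩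
    choose φ hφ using this
    have inj : ∀ k k' : ℚ, k • v = k' • v → k = k' := fun k k' h => smul_left_injective ℚ hv h
    refine ⟨⟨⟨φ, fun x y => inj _ _ ?_⟩, fun c x => inj _ _ ?_⟩, ?_, ?_, ?_⟩
    · rw [add_smul, hφ, hφ, hφ, map_add]
    · simp [mul_smul, hφ]
    · intro h
      have : φ u = 0 := LinearMap.congr_fun h u
      apply hv
      rw [← hNu, ← hφ, this, zero_smul]
    · change φ v = 0
      apply inj
      rw [hφ, hNv, zero_smul]
    · intro i x
      change φ _ = φ x
      apply inj
      rw [hφ, hc, ← hφ x, map_smul, hfix]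
  · have h2 : 1 < Module.finrank ℚ (LinearMap.range N) := by
      rw [← hsv]; exact Submodule.finrank_lt_finrank_of_lt (lt_of_le_of_ne hvr (Ne.symm hr))
    have h3 : 1 ≤ Module.finrank ℚ (LinearMap.ker N) := by
      rw [← hsv]; exact Submodule.finrank_mono hvk
    have hker : (ℚ ∙ v) = LinearMap.ker N := Submodule.eq_of_le_of_finrank_eq hvk (by omega)
    have hlt : LinearMap.range N < ⊤ := by
      rw [lt_top_iff_ne_top]; intro h
      rw [h, finrank_top, Module.finrank_fin_fun] at hrn
      omega
    obtain ⟨w, hw0, hw⟩ := Submodule.exists_le_ker_of_lt_top _ hlt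
    have hwN : ∀ x, w (N x) = 0 := fun x => hw ⟨x, rfl⟩
    have hwr := w.finrank_range_add_finrank_ker
    have hwrange : LinearMap.range w = ⊤ := LinearMap.range_eq_top.mpr (LinearMap.surjective hw0)
    rw [hwrange, finrank_top, Module.finrank_self, Module.finrank_fin_fun] at hwr
    have hrk : LinearMap.range N = LinearMap.ker w := Submodule.eq_of_le_of_finrank_eq hw (by omega)
    have hk : ∀ x, N x = 0 → ∃ k : ℚ, k • v = x := fun x hx => by
      rw [← Submodule.mem_span_singleton, hker]; exact hx
    have hkw : ∀ x, w x = 0 → ∃ y, N y = x := fun x hx => by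
      have : x ∈ LinearMap.range N := by rw [hrk]; exact hx
      exact this
    have hwv : w v = 0 := by rw [← hNu, hwN]
    refine ⟨w, hw0, hwv, ?_⟩
    have key : ∀ s, w s ≠ 0 → (∀ i, w (B i s - s) = 0) → ∀ i x, w (B i x) = w x := by
      intro s hs hBs i x
      obtain ⟨y, hy⟩ := hkw (x - (w x / w s) • s) (by simp [hs])
      have e := hwN (B i y)
      rw [hc, hy] at e
      have e2 := hBs i
      simp only [map_sub, map_smul, smul_eq_mul] at e e2
      rw [sub_eq_zero.mp e2, div_mul_cancel₀ _ hs] at e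
      linarith
    have hBu : ∀ i, ∃ k : ℚ, k • v = B i u - u := fun i => hk _ (by rw [map_sub, hc, hNu, hfix, sub_self])
    by_cases hwu : w u = 0
    · obtain ⟨t, ht⟩ := hkw u hwu
      by_cases hwt : w t = 0
      · exfalso
        obtain ⟨s, hs⟩ := hkw t hwt
        have e := Module.End.ker_pow_eq_ker_pow_finrank_of_le (f := N) (m := 4) (by simp)
        have : s ∈ LinearMap.ker (N ^ 4) := by
          simp [pow_succ, hs, ht, hNu, hNv]
        rw [e, Module.finrank_fin_fun] at this
        simp [pow_succ, hs, ht, hNu] at this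
        exact hv this
      · refine key t hwt fun i => ?_
        obtain ⟨k, hk1⟩ := hBu i
        obtain ⟨k', hk'⟩ := hk (B i t - t - k • u) (by
          rw [map_sub, map_sub, hc, ht, map_smul, hNu, hk1, sub_self])
        have : B i t - t = k' • v + k • u := by rw [hk']; abel
        rw [this]; simp [hwv, hwu]
    · refine key u hwu fun i => ?_
      obtain ⟨k, hk⟩ := hBu i
      rw [← hk]; simp [hwv]

lemma pointwise {p : ℕ} (A : (Fin p → ℤ) → Matrix (Fin 3) (Fin 3) ℚ)
    (hA : ∀ l l', A (l + l') = A l * A l')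
    (v : Fin 3 → ℚ) (hv : v ≠ 0) (hfix : ∀ l, A l *ᵥ v = v)
    (l0 : Fin p → ℤ) (hl0 : l0 ≠ 0) :
    ∃ β : (Fin p → ℤ) → (Fin 3 → ℚ), (∀ l l', β (l + l') = β l + A l *ᵥ β l') ∧
      ∃ F : (Fin 3 → ℚ) →ₗ[ℚ] ℚ, (∀ x, F (A l0 *ᵥ x) = F x) ∧ F (β l0) ≠ 0 := by
  by_cases hu : ∃ u, A l0 *ᵥ u - u = v
  · obtain ⟨u, hu⟩ := hu
    obtain ⟨w, hw0, hwv, hw⟩ := exists_w (fun l => (A l).mulVecLin) l0 (fun i x => by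
      simp only [Matrix.mulVecLin_apply, Matrix.mulVec_mulVec, ← hA, add_comm]) v u hv hfix hu
    have hwr := w.finrank_range_add_finrank_ker
    have hws := LinearMap.surjective hw0
    rw [LinearMap.range_eq_top.mpr hws, finrank_top, Module.finrank_self, Module.finrank_fin_fun] at hwr
    obtain ⟨e3, he3⟩ := hws 1
    obtain ⟨e2, he2, he2'⟩ : ∃ e2, w e2 = 0 ∧ e2 ∉ (ℚ ∙ v) := by
      by_contra! hcon
      have : LinearMap.ker w ≤ ℚ ∙ v := fun x hx => hcon x hx
      have := Submodule.finrank_mono this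
      rw [finrank_span_singleton hv] at this
      omega
    have hli : LinearIndependent ℚ ![v, e2, e3] := by
      rw [Fintype.linearIndependent_iff]
      intro g hg
      simp only [Fin.sum_univ_three, Matrix.cons_val] at hg
      have h2 : g 2 = 0 := by
        have := congrArg w hg
        simpa [hwv, he2, he3] using this
      rw [h2, zero_smul, add_zero] at hg
      have h1 : g 1 = 0 := by
        by_contra h
        apply he2'
        rw [Submodule.mem_span_singleton]
        refine ⟨- (g 1)⁻¹ * g 0, ?_⟩
        rw [mul_smul, eq_neg_of_add_eq_zero_left hg, smul_neg, neg_smul, neg_neg, smul_smul,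
          inv_mul_cancel₀ h, one_smul]
      rw [h1, zero_smul, add_zero] at hg
      have h0 := (smul_eq_zero.mp hg).resolve_right hv
      intro i
      fin_cases i <;> assumption
    let e := basisOfLinearIndependentOfCardEqFinrank hli (by simp)
    have ee : ⇑e = ![v, e2, e3] := coe_basisOfLinearIndependentOfCardEqFinrank hli (by simp)
    have e_0 : e 0 = v := by rw [ee]; rfl
    have e_1 : e 1 = e2 := by rw [ee]; rfl
    have e_2 : e 2 = e3 := by rw [ee]; rfl
    have hcoord : ∀ x, e.repr x 2 = w x := by
      intro x
      have : e.coord 2 = w := e.ext fun i => by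
        rw [Module.Basis.coord_apply, Module.Basis.repr_self]
        fin_cases i <;> simp [e_0, e_1, e_2, hwv, he2, he3]
      rw [← this]; rfl
    let T := fun l => LinearMap.toMatrix e e (A l).mulVecLin
    have Tap : ∀ l i j, T l i j = e.repr (A l *ᵥ e j) i := fun l i j => by
      simp [T, LinearMap.toMatrix_apply]
    have T0 : ∀ l i, T l i 0 = if i = 0 then 1 else 0 := fun l i => by
      rw [Tap, e_0, hfix, ← e_0]; simp [Finsupp.single_apply, eq_comm]
    have T2 : ∀ l j, T l 2 j = if j = 2 then 1 else 0 := fun l j => by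
      rw [Tap, hcoord]
      have := hw l (e j)
      rw [Matrix.mulVecLin_apply] at this
      rw [this, ← hcoord]; simp [Finsupp.single_apply]
    obtain ⟨β, hβ, f, hf, hfβ⟩ := core T (fun l l' => by
        simp only [T, hA, Matrix.mulVecLin_mul, LinearMap.toMatrix_comp e e e])
      (by simp [T0]) (by simp [T0]) (by simp [T0]) (by simp [T2]) (by simp [T2]) l0 hl0
    have hTe : ∀ l x, e.equivFun (A l *ᵥ x) = T l *ᵥ e.equivFun x := fun l x =>
      (LinearMap.toMatrix_mulVec_repr e e (A l).mulVecLin x).symm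
    refine ⟨fun l => e.equivFun.symm (β l), fun l l' => ?_,
      (⟨⟨fun y => f ⬝ᵥ y, fun y z => dotProduct_add f y z⟩, fun c y => dotProduct_smul c f y⟩ :
        (Fin 3 → ℚ) →ₗ[ℚ] ℚ) ∘ₗ e.equivFun.toLinearMap, fun x => ?_, ?_⟩
    · apply e.equivFun.injective
      rw [map_add, hTe]
      simp only [LinearEquiv.apply_symm_apply, hβ]
    · change f ⬝ᵥ e.equivFun _ = f ⬝ᵥ e.equivFun x
      rw [hTe, Matrix.dotProduct_mulVec, hf]
    · change f ⬝ᵥ e.equivFun _ ≠ 0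
      rw [LinearEquiv.apply_symm_apply]; exact hfβ
  · have : v ∉ LinearMap.range ((A l0).mulVecLin - LinearMap.id) := by
      rintro ⟨u, h⟩; exact hu ⟨u, h⟩
    obtain ⟨F, hF, hF'⟩ := Submodule.exists_le_ker_of_notMem this
    obtain ⟨i, hi⟩ := Function.ne_iff.mp hl0
    refine ⟨fun l => (l i : ℚ) • v, fun l l' => ?_, F, fun x => ?_, ?_⟩
    · simp [Matrix.mulVec_smul, hfix, add_smul]
    · have := hF' ⟨x, rfl⟩
      simpa [sub_eq_zero] using this
    · simp only [map_smul, smul_eq_mul]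
      exact mul_ne_zero (by simpa using hi) hF

def cocyc {p : ℕ} (A : (Fin p → ℤ) → Matrix (Fin 3) (Fin 3) ℚ) :
    Submodule ℚ ((Fin p → ℤ) → (Fin 3 → ℚ)) where
  carrier := {β | ∀ l l', β (l + l') = β l + A l *ᵥ β l'}
  zero_mem' := by intro l l'; simp
  add_mem' := by
    intro x y hx hy l l'
    simp only [Pi.add_apply, hx l l', hy l l', Matrix.mulVec_add]; abel
  smul_mem' := by
    intro c x hx l l'
    simp only [Pi.smul_apply, hx l l', Matrix.mulVec_smul, smul_add]

lemma cocyc_fin {p : ℕ} (A : (Fin p → ℤ) → Matrix (Fin 3) (Fin 3) ℚ)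
    (h0 : A 0 = 1) :
    FiniteDimensional ℚ (cocyc A) := by
  let L : cocyc A →ₗ[ℚ] (Fin p → Fin 3 → ℚ) :=
    { toFun := fun β i => β.1 (Pi.single i 1)
      map_add' := fun _ _ => rfl
      map_smul' := fun _ _ => rfl }
  refine FiniteDimensional.of_injective L ?_
  rw [← LinearMap.ker_eq_bot, LinearMap.ker_eq_bot']
  rintro ⟨β, hβ⟩ hL
  have hβ : ∀ l l', β (l + l') = β l + A l *ᵥ β l' := hβ
  have hz : β 0 = 0 := by
    have := hβ 0 0
    simpa [h0] using this
  let S : AddSubgroup (Fin p → ℤ) :=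
    { carrier := {l | β l = 0}
      zero_mem' := hz
      add_mem' := by
        intro x y hx hy
        change β _ = 0
        rw [hβ, show β x = 0 from hx, show β y = 0 from hy]; simp
      neg_mem' := by
        intro x hx
        have := hβ (-x) x
        rw [neg_add_cancel, hz, show β x = 0 from hx] at this
        simpa using this.symm }
  ext1
  funext l
  change l ∈ S
  rw [pi_eq_sum_univ' l]
  refine S.sum_mem fun i _ => S.zsmul_mem ?_ _
  exact congrFun hL i

lemma exists_tau (n : ℕ) : ∃ τ : Fin (n + 1) → ℝ, LinearIndependent ℚ τ ∧ τ 0 = 1 := by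
  have h : ((n + 1 : ℕ) : Cardinal) ≤ Module.rank ℚ ℝ := by
    rw [Real.rank_rat_real]; exact (Cardinal.nat_lt_continuum (n + 1)).le
  obtain ⟨s, hs, hli⟩ := le_rank_iff_exists_linearIndependent_finset.mp h
  let e := (Finset.equivFinOfCardEq hs).symm
  have h1 : LinearIndependent ℚ (fun i => (e i : ℝ)) := hli.comp _ e.injective
  have hne : (e 0 : ℝ) ≠ 0 := h1.ne_zero 0
  refine ⟨fun i => (e 0 : ℝ)⁻¹ * e i, ?_, inv_mul_cancel₀ hne⟩
  refine h1.map' (LinearMap.mulLeft ℚ ((e 0 : ℝ)⁻¹)) ?_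
  rw [LinearMap.ker_eq_bot]
  exact mul_right_injective₀ (inv_ne_zero hne)

/-- STATEMENT 16: Every `ℤ^p`-action `A` on `ℤ³` with nonzero fixed-point set is the linear
part of a free affine `ℤ^p`-action on `T² = ℝ³/ℤ³`: there is a translation part
`α : ℤ^p → ℝ³` which is a 1-cocycle over `A` modulo `ℤ³` such that `x ↦ A(ℓ)x + α(ℓ)`
has no fixed point on the torus for `ℓ ≠ 0`. -/
theorem stmt17 (p : ℕ)
    (A : (Fin p → ℤ) → Matrix (Fin 3) (Fin 3) ℤ)
    (hhom : ∀ ℓ ℓ', A (ℓ + ℓ') = A ℓ * A ℓ')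
    (h0 : A 0 = 1)
    (hunit : ∀ ℓ, IsUnit (A ℓ).det)
    (hfix : ∃ v : Fin 3 → ℤ, v ≠ 0 ∧ ∀ ℓ, (A ℓ).mulVec v = v) :
    ∃ α : (Fin p → ℤ) → (Fin 3 → ℝ),
      (∀ ℓ ℓ', ∃ N : Fin 3 → ℤ,
        α (ℓ + ℓ') = α ℓ + ((A ℓ).map (Int.cast : ℤ → ℝ)).mulVec (α ℓ')
          + fun i => ((N i : ℤ) : ℝ)) ∧
      (∀ ℓ : Fin p → ℤ, ℓ ≠ 0 → ∀ x : Fin 3 → ℝ,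
        ¬ ∃ N : Fin 3 → ℤ,
          ((A ℓ).map (Int.cast : ℤ → ℝ)).mulVec x + α ℓ = x + fun i => ((N i : ℤ) : ℝ)) := by
  obtain ⟨v, hv, hvfix⟩ := hfix
  let B : (Fin p → ℤ) → Matrix (Fin 3) (Fin 3) ℚ := fun l => (A l).map (Int.cast : ℤ → ℚ)
  have hB : ∀ l l', B (l + l') = B l * B l' := fun l l' => by
    simp only [B, hhom]
    exact Matrix.map_mul (f := Int.castRingHom ℚ)
  have hB0 : B 0 = 1 := by
    simp only [B, h0]; exact Matrix.map_one _ (by simp) (by simp)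
  have hvB : ∀ l, B l *ᵥ (fun i => (v i : ℚ)) = fun i => (v i : ℚ) := fun l => by
    funext i
    have := congrArg (Int.cast : ℤ → ℚ) (congrFun (hvfix l) i)
    simpa [B, Matrix.mulVec, dotProduct] using this
  have hvne : (fun i => (v i : ℚ)) ≠ 0 := by
    intro h
    apply hv
    funext i
    simpa using congrFun h i
  have := cocyc_fin B hB0
  let b := Module.finBasis ℚ (cocyc B)
  obtain ⟨τ, hτ, hτ0⟩ := exists_tau (Module.finrank ℚ (cocyc B))
  have hb : ∀ j l l', (b j).1 (l + l') = (b j).1 l + B l *ᵥ (b j).1 l' := fun j => (b j).2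
  refine ⟨fun l i => ∑ j, τ j.succ * ((b j).1 l i : ℝ), fun l l' => ⟨0, ?_⟩, ?_⟩
  · funext i
    simp only [Pi.add_apply, hb, Matrix.mulVec, dotProduct, Matrix.map_apply, B, Pi.zero_apply,
      Int.cast_zero, add_zero, Rat.cast_add, Rat.cast_sum, Rat.cast_mul, Rat.cast_intCast, mul_add,
      Finset.sum_add_distrib, Finset.mul_sum]
    congr 1
    rw [Finset.sum_comm]
    refine Finset.sum_congr rfl fun _ _ => Finset.sum_congr rfl fun _ _ => by ring
  · rintro l hl x ⟨N, hN⟩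
    obtain ⟨β, hβ, F, hF, hFβ⟩ := pointwise B hB _ hvne hvB l hl
    -- some basis cocycle is detected by F
    obtain ⟨j, hj⟩ : ∃ j, F ((b j).1 l) ≠ 0 := by
      by_contra! hcon
      apply hFβ
      have e := congrArg Subtype.val (b.sum_repr ⟨β, hβ⟩)
      have e := congrFun e l
      simp only [AddSubmonoidClass.coe_finsetSum, Finset.sum_apply, SetLike.val_smul,
        Pi.smul_apply] at e
      rw [← e, map_sum]
      exact Finset.sum_eq_zero fun k _ => by rw [map_smul, hcon, smul_zero]
    let f : Fin 3 → ℚ := fun i => F (Pi.single i 1)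
    have hFf : ∀ y, F y = ∑ i, f i * y i := fun y => by
      conv_lhs => rw [pi_eq_sum_univ' y]
      rw [map_sum]
      refine Finset.sum_congr rfl fun i _ => ?_
      rw [map_smul, smul_eq_mul, mul_comm]
    have hfA : ∀ k, ∑ i, (f i : ℝ) * (A l i k : ℝ) = f k := fun k => by
      have := hF (Pi.single k 1)
      rw [hFf] at this
      have := congrArg (Rat.cast : ℚ → ℝ) this
      simpa [B, f] using this
    have key : ∑ i, (f i : ℝ) * ((((A l).map (Int.cast : ℤ → ℝ)).mulVec x) i) = ∑ i, (f i : ℝ) * x i := by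
      simp only [Matrix.mulVec, dotProduct, Matrix.map_apply, Finset.mul_sum]
      rw [Finset.sum_comm]
      refine Finset.sum_congr rfl fun k _ => ?_
      rw [← hfA k, Finset.sum_mul]
      exact Finset.sum_congr rfl fun _ _ => by ring
    have h1 : ∑ i, (f i : ℝ) * (∑ j, τ j.succ * ((b j).1 l i : ℝ)) = ∑ i, (f i : ℝ) * (N i : ℝ) := by
      have : ∀ i, (f i : ℝ) * ((((A l).map (Int.cast : ℤ → ℝ)).mulVec x) i) +
          (f i : ℝ) * (∑ j, τ j.succ * ((b j).1 l i : ℝ)) = (f i : ℝ) * x i + (f i : ℝ) * N i := fun i => by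
        have := congrFun hN i
        simp only [Pi.add_apply] at this
        rw [← mul_add, ← mul_add, this]
      have := Finset.sum_congr (rfl : (Finset.univ : Finset (Fin 3)) = _) fun i _ => this i
      rw [Finset.sum_add_distrib, Finset.sum_add_distrib, key] at this
      exact add_left_cancel this
    have h2 : ∑ i, (f i : ℝ) * (∑ j, τ j.succ * ((b j).1 l i : ℝ)) =
        ∑ j, ((F ((b j).1 l) : ℚ) : ℝ) * τ j.succ := by
      simp only [hFf, Rat.cast_sum, Rat.cast_mul, Finset.sum_mul, Finset.mul_sum]
      rw [Finset.sum_comm]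
      refine Finset.sum_congr rfl fun _ _ => Finset.sum_congr rfl fun _ _ => by ring
    rw [Fintype.linearIndependent_iff] at hτ
    have := hτ (Fin.cons (- ∑ i, f i * N i) fun j => F ((b j).1 l)) (by
      rw [Fin.sum_univ_succ]
      simp only [Fin.cons_zero, Fin.cons_succ, hτ0, Rat.smul_def]
      rw [← h2, h1]
      push_cast
      ring) j.succ
    rw [Fin.cons_succ] at this
    exact hj this
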